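/- arXiv:1805.00041 — 2 statements merged into one kernel-verified Lean document; each statement's English description precedes it below -/
import Mathlib

section
/- In the scheduling model with common chunk size X > 0, the backward greedy selection pushes all skips toward chunks of lower index: if S ⊆ {1,…,C} is any feasible set with |S| = |G|, if i_1 < i_2 < … < i_H are the elements of {1,…,C} \\ G (the chunks skipped by the backward greedy) and j_1 < j_2 < … < j_H are the elements of {1,…,C} \\ S, then i_k ≤ j_k for every k = 1,…,H. -/
/-!
Chunks have equal sizes and their windows are ordered like their indices, so every schedule can be
rearranged in first-in-first-out order. Hence `S` is feasible iff some cumulative download curve `F`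
grows by at most the bandwidth in each slot and satisfies
`X · #{d ≤ τ} ≤ F τ ≤ X · min (#{t ≤ τ}, K + #{d ≤ τ})` for every slot `τ`, where the counts range
over `S` and `K = ⌊B_m / L⌋` is the number of chunks the buffer holds.

The greedy selection stays ahead of every feasible set: at each stage, the final segment of `S`
processed so far is below the selection `G` in the Gale order. The only critical stage is a chunk
`n ∈ S` processed when `G` and the segment `T` of `S` above `n` have the same number of elements.
For monotone `f` the Gale order then gives
`#{i ∈ G ∪ {n} | f i ≤ τ} = min (#{i ∈ T ∪ {n} | f i ≤ τ}, #{i ∈ G | f i ≤ τ} + 1)`.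
So, if `F₁` and `F₂` are download curves for `T ∪ {n}` and `G`, the curve `min (F₁, F₂ + X)`
witnesses the feasibility of `G ∪ {n}`, and the greedy selection accepts `n`. Passing to complements
reverses the Gale order.
-/

open scoped Classical

structure SchedModel where
  C : ℕ
  hC : 1 ≤ C
  L : ℝ
  hL : 0 < L
  B : ℕ → ℝ
  hB : ∀ j, 0 ≤ B j
  t : ℕ → ℕ
  d : ℕ → ℕ
  ht : ∀ i, 1 ≤ t i
  htd : ∀ i, t i ≤ d i
  tmono : Monotone t
  dmono : Monotone d
  Bm : ℝ
  hBm : 0 < Bm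

/-- A feasible schedule for per-chunk download amounts `X`. -/
def SchedModel.IsSchedule (M : SchedModel) (X : ℕ → ℝ) (z : ℕ → ℕ → ℝ) : Prop :=
  (∀ i j, 0 ≤ z i j) ∧
  (∀ i j, (j < M.t i ∨ M.d i < j) → z i j = 0) ∧
  (∀ i ∈ Finset.Icc 1 M.C, ∑ j ∈ Finset.Icc 1 (M.d i), z i j = X i) ∧
  (∀ j, ∑ i ∈ Finset.Icc 1 M.C, z i j ≤ M.B j) ∧
  (∀ τ, M.L * (((Finset.Icc 1 M.C).filter
      (fun i => τ < M.d i ∧ 0 < ∑ j ∈ Finset.Icc 1 τ, z i j)).card : ℝ) ≤ M.Bm)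

/-- With common chunk size `X`, a set `S` of chunks is feasible if there is a
schedule downloading amount `X` for every chunk in `S` and `0` otherwise. -/
def SchedModel.FeasibleSet (M : SchedModel) (X : ℝ) (S : Finset ℕ) : Prop :=
  ∃ z : ℕ → ℕ → ℝ, M.IsSchedule (fun i => if i ∈ S then X else 0) z

/-- Backward greedy selection after processing the `k` chunks `C, C−1, …, C−k+1`:
a chunk is added iff the selection so far together with it is feasible. -/
noncomputable def SchedModel.backGreedyAux (M : SchedModel) (X : ℝ) : ℕ → Finset ℕ
  | 0 => ∅
  | k + 1 =>
    let G := M.backGreedyAux X k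
    if M.FeasibleSet X (insert (M.C - k) G) then insert (M.C - k) G else G

/-- The backward greedy selection (chunks processed in decreasing order C,…,1). -/
noncomputable def SchedModel.backGreedy (M : SchedModel) (X : ℝ) : Finset ℕ :=
  M.backGreedyAux X M.C

open Finset

/-- The Gale order on finite sets: `S` is below `T` if `T` has at least as many elements as `S` in
every final segment. This allows sets of different cardinalities; for equal cardinalities it is the
comparison of the increasing enumerations. -/
def GaleLE {ι : Type*} [LinearOrder ι] (S T : Finset ι) : Prop :=
  ∀ v, #{i ∈ S | v ≤ i} ≤ #{i ∈ T | v ≤ i}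

/-- The number of elements `i` of `S` with `f i ≤ τ`. For `f` the release times or the deadlines of
the chunks, this counts the chunks of `S` released, or due, by slot `τ`. -/
def countLE {ι α : Type*} [LinearOrder α] (f : ι → α) (S : Finset ι) (τ : α) : ℕ :=
  #{i ∈ S | f i ≤ τ}

namespace GaleLE

variable {ι : Type*} [LinearOrder ι] {S T U : Finset ι} {n : ι}

lemma of_subset (h : S ⊆ T) : GaleLE S T :=
  fun _ => card_le_card (filter_subset_filter _ h)

lemma trans (hST : GaleLE S T) (hTU : GaleLE T U) : GaleLE S U :=
  fun v => (hST v).trans (hTU v)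

lemma insert_insert (h : GaleLE S T) (hn : n ∉ T) : GaleLE (insert n S) (insert n T) := by
  intro v
  rw [filter_insert, filter_insert]
  split_ifs
  · rw [card_insert_of_notMem (s := {i ∈ T | v ≤ i}) (by simp [hn])]
    exact (card_insert_le _ _).trans (Nat.succ_le_succ (h v))
  · exact h v

lemma insert_left (h : GaleLE S T) (hcard : #S < #T) (hn : ∀ i ∈ T, n ≤ i) :
    GaleLE (insert n S) T := by
  intro v
  rcases le_or_gt v n with hv | hv
  · calc #{i ∈ insert n S | v ≤ i} ≤ #(insert n S) := card_filter_le _ _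
      _ ≤ #S + 1 := card_insert_le _ _
      _ ≤ #T := hcard
      _ = #{i ∈ T | v ≤ i} := by rw [filter_true_of_mem fun i hi => hv.trans (hn i hi)]
  · rw [filter_insert, if_neg hv.not_ge]
    exact h v

lemma sdiff (h : GaleLE S T) (hT : T ⊆ U) : GaleLE (U \ T) (U \ S) := by
  have filter_sdiff_eq (V : Finset ι) (v : ι) :
      {i ∈ U \ V | v ≤ i} = {i ∈ U | v ≤ i} \ {i ∈ V | v ≤ i} := by
    ext i
    simp only [mem_filter, mem_sdiff]
    tauto
  intro v
  calc #{i ∈ U \ T | v ≤ i} = #{i ∈ U | v ≤ i} - #{i ∈ T | v ≤ i} := by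
        rw [filter_sdiff_eq, card_sdiff_of_subset (filter_subset_filter _ hT)]
    _ ≤ #{i ∈ U | v ≤ i} - #{i ∈ S | v ≤ i} := Nat.sub_le_sub_left (h v) _
    _ ≤ #{i ∈ U \ S | v ≤ i} := by
        rw [filter_sdiff_eq]
        exact le_card_sdiff _ _

end GaleLE

lemma card_filter_orderEmbOfFin_le {ι : Type*} [LinearOrder ι] {S : Finset ι} {H : ℕ}
    (hS : #S = H) (k : Fin H) : #{i ∈ S | S.orderEmbOfFin hS k ≤ i} = H - k := by
  have hmap : {i ∈ S | S.orderEmbOfFin hS k ≤ i} =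
      (Ici k).map (S.orderEmbOfFin hS).toEmbedding := by
    ext i
    simp only [mem_filter, mem_map, mem_Ici, RelEmbedding.coe_toEmbedding]
    constructor
    · rintro ⟨hi, hki⟩
      obtain ⟨l, rfl⟩ : i ∈ Set.range (S.orderEmbOfFin hS) := by rwa [range_orderEmbOfFin]
      exact ⟨l, (S.orderEmbOfFin hS).le_iff_le.1 hki, rfl⟩
    · rintro ⟨l, hkl, rfl⟩
      exact ⟨S.orderEmbOfFin_mem hS l, (S.orderEmbOfFin hS).monotone hkl⟩
  rw [hmap, card_map, Fin.card_Ici]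

lemma GaleLE.orderEmbOfFin_le {ι : Type*} [LinearOrder ι] {S T : Finset ι} (h : GaleLE S T)
    {H : ℕ} (hS : #S = H) (hT : #T = H) (k : Fin H) :
    S.orderEmbOfFin hS k ≤ T.orderEmbOfFin hT k := by
  by_contra! hlt
  have hlast : #{i ∈ T | S.orderEmbOfFin hS k ≤ i} < #{i ∈ T | T.orderEmbOfFin hT k ≤ i} := by
    apply card_lt_card
    rw [ssubset_iff_of_subset (monotone_filter_right T fun i _ hi => hlt.le.trans hi)]
    exact ⟨T.orderEmbOfFin hT k, by simp, by simp [hlt]⟩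
  rw [card_filter_orderEmbOfFin_le hT, ← card_filter_orderEmbOfFin_le hS] at hlast
  exact (h _).not_gt hlast

section CountLE

variable {ι α : Type*} [LinearOrder α] {f : ι → α} {S T : Finset ι} {τ : α}

lemma countLE_le_card : countLE f S τ ≤ #S := card_filter_le _ _

lemma countLE_eq_zero (h : ∀ i ∈ S, τ < f i) : countLE f S τ = 0 := by
  rw [countLE, card_eq_zero, filter_eq_empty_iff]
  exact fun i hi => (h i hi).not_ge

lemma mul_countLE {R : Type*} [NonAssocSemiring R] (x : R) :
    x * countLE f S τ = ∑ i ∈ S, if f i ≤ τ then x else 0 := by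
  rw [countLE, ← sum_filter, sum_const, nsmul_eq_mul, Nat.cast_comm]

lemma countLE_insert [DecidableEq ι] {n : ι} (hn : n ∉ S) :
    countLE f (insert n S) τ = countLE f S τ + if f n ≤ τ then 1 else 0 := by
  rw [countLE, filter_insert]
  split_ifs
  · rw [card_insert_of_notMem (by simp [hn]), countLE]
  · rfl

variable [LinearOrder ι] {n : ι}

/-- The sets `{i | τ < f i}` are final segments. -/
lemma GaleLE.card_filter_lt_le (h : GaleLE S T) (hf : Monotone f) (τ : α) :
    #{i ∈ S | τ < f i} ≤ #{i ∈ T | τ < f i} := by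
  rcases {i ∈ S | τ < f i}.eq_empty_or_nonempty with hempty | hne
  · simp [hempty]
  · set v := {i ∈ S | τ < f i}.min' hne
    have hv : τ < f v := (mem_filter.1 (min'_mem _ hne)).2
    calc #{i ∈ S | τ < f i} ≤ #{i ∈ S | v ≤ i} := card_le_card fun i hi =>
          mem_filter.2 ⟨(mem_filter.1 hi).1, min'_le _ i hi⟩
      _ ≤ #{i ∈ T | v ≤ i} := h v
      _ ≤ #{i ∈ T | τ < f i} :=
          card_le_card (monotone_filter_right T fun i _ hi => hv.trans_le (hf hi))

lemma GaleLE.countLE_le (h : GaleLE S T) (hcard : #T ≤ #S) (hf : Monotone f) (τ : α) :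
    countLE f T τ ≤ countLE f S τ := by
  have htail := h.card_filter_lt_le hf τ
  have hsplit (V : Finset ι) : countLE f V τ + #{i ∈ V | τ < f i} = #V := by
    simpa only [countLE, not_le] using V.card_filter_add_card_filter_not (f · ≤ τ)
  have hS := hsplit S
  have hT := hsplit T
  omega

lemma GaleLE.countLE_insert_eq_min (h : GaleLE S T) (hcard : #T ≤ #S) (hS : ∀ i ∈ S, n < i)
    (hT : ∀ i ∈ T, n < i) (hf : Monotone f) (τ : α) :
    countLE f (insert n T) τ = min (countLE f (insert n S) τ) (countLE f T τ + 1) := by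
  rw [countLE_insert fun hn => (hS n hn).false, countLE_insert fun hn => (hT n hn).false]
  by_cases hn : f n ≤ τ
  · simpa [hn] using h.countLE_le hcard hf τ
  · have hS0 : countLE f S τ = 0 :=
      countLE_eq_zero fun i hi => (not_le.1 hn).trans_le (hf (hS i hi).le)
    have hT0 : countLE f T τ = 0 :=
      countLE_eq_zero fun i hi => (not_le.1 hn).trans_le (hf (hT i hi).le)
    simp [hn, hS0, hT0]

end CountLE

section Rank

variable {S : Finset ℕ} {i : ℕ}

lemma injOn_count_mem (S : Finset ℕ) : Set.InjOn (Nat.count (· ∈ S)) S :=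
  fun _ hi _ hj hij => Nat.count_injective (p := (· ∈ S)) hi hj hij

lemma count_mem_lt_card (hi : i ∈ S) : Nat.count (· ∈ S) i < #S := by
  rw [Nat.count_eq_card_filter_range]
  exact card_lt_card ((ssubset_iff_of_subset fun j hj => (mem_filter.1 hj).2).2
    ⟨i, hi, by simp⟩)

lemma image_count_mem (S : Finset ℕ) : S.image (Nat.count (· ∈ S)) = range #S := by
  apply eq_of_subset_of_card_le
  · exact image_subset_iff.2 fun i hi => mem_range.2 (count_mem_lt_card hi)
  · rw [card_range, card_image_of_injOn (injOn_count_mem S)]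

lemma sum_count_mem {α : Type*} [AddCommMonoid α] (f : ℕ → α) (S : Finset ℕ) :
    ∑ i ∈ S, f (Nat.count (· ∈ S) i) = ∑ r ∈ range #S, f r := by
  rw [← image_count_mem, sum_image (injOn_count_mem S)]

variable {α : Type*} [LinearOrder α] {f : ℕ → α} {τ : α}

lemma countLE_le_count_mem (hf : Monotone f) (h : τ < f i) :
    countLE f S τ ≤ Nat.count (· ∈ S) i := by
  rw [Nat.count_eq_card_filter_range]
  apply card_le_card
  intro j hj
  rw [mem_filter] at hj
  exact mem_filter.2 ⟨mem_range.2 (hf.reflect_lt (hj.2.trans_lt h)), hj.1⟩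

lemma count_mem_lt_countLE (hf : Monotone f) (hi : i ∈ S) (h : f i ≤ τ) :
    Nat.count (· ∈ S) i < countLE f S τ := by
  rw [Nat.count_eq_card_filter_range]
  apply card_lt_card
  rw [ssubset_iff_of_subset]
  · exact ⟨i, by simp [hi, h], by simp⟩
  · intro j hj
    rw [mem_filter, mem_range] at hj
    exact mem_filter.2 ⟨hj.2, (hf hj.1.le).trans h⟩

end Rank

/-- The part of a total amount `F`, downloaded in first-in-first-out order, that goes to the chunk
preceded by `r` others. The two minima are the amounts going to the first `r + 1` and to the first
`r` chunks, so that sums over `r` telescope. -/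
noncomputable def fifo (X F : ℝ) (r : ℕ) : ℝ := min F ((r + 1) * X) - min F (r * X)

/-- The cumulative amount of chunk `i` downloaded by slot `τ` when the totals `F` are assigned to
the chunks of `S` in first-in-first-out order. -/
noncomputable def fifoCum (X : ℝ) (S : Finset ℕ) (F : ℕ → ℝ) (i τ : ℕ) : ℝ :=
  if i ∈ S then fifo X (F τ) (Nat.count (· ∈ S) i) else 0

section Fifo

variable {X F : ℝ} {r : ℕ}

lemma fifo_mono (hX : 0 ≤ X) : Monotone (fifo X · r) := by
  intro F F' hF
  simp only [fifo, min_def]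
  split_ifs <;> linarith

lemma fifo_eq_zero (hX : 0 ≤ X) (h : F ≤ r * X) : fifo X F r = 0 := by
  rw [fifo, min_eq_left h, min_eq_left (by linarith), sub_self]

lemma fifo_eq_self (hX : 0 ≤ X) (h : (r + 1) * X ≤ F) : fifo X F r = X := by
  rw [fifo, min_eq_right h, min_eq_right (by linarith)]
  ring

lemma sum_fifo (hF : 0 ≤ F) (n : ℕ) : ∑ r ∈ range n, fifo X F r = min F (n * X) := by
  have htelescope := sum_range_sub (fun r : ℕ => min F (r * X)) n
  simpa [fifo, hF] using htelescope

end Fifo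

/-- The amount of chunk `i` downloaded in slots `1, …, τ` under the schedule `z`. -/
def downloaded (z : ℕ → ℕ → ℝ) (i τ : ℕ) : ℝ := ∑ j ∈ Icc 1 τ, z i j

lemma downloaded_succ (z : ℕ → ℕ → ℝ) (i τ : ℕ) :
    downloaded z i (τ + 1) = downloaded z i τ + z i (τ + 1) :=
  sum_Icc_succ_top (by omega) _

namespace SchedModel

variable {M : SchedModel} {X : ℝ} {x : ℕ → ℝ} {z : ℕ → ℕ → ℝ} {S T : Finset ℕ} {i τ n : ℕ}

variable (M) in
/-- The number of chunks that fit into the buffer. -/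
noncomputable def bufCap : ℕ := ⌊M.Bm / M.L⌋₊

lemma mul_le_Bm_iff {m : ℕ} : M.L * (m : ℝ) ≤ M.Bm ↔ m ≤ M.bufCap := by
  rw [bufCap, Nat.le_floor_iff (div_nonneg M.hBm.le M.hL.le), le_div_iff₀' M.hL]

lemma IsSchedule.downloaded_mono (h : M.IsSchedule x z) (i : ℕ) : Monotone (downloaded z i) := by
  intro a b hab
  exact sum_le_sum_of_subset_of_nonneg (Icc_subset_Icc_right hab) fun j _ _ => h.1 i j

lemma IsSchedule.downloaded_nonneg (h : M.IsSchedule x z) (i τ : ℕ) : 0 ≤ downloaded z i τ :=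
  sum_nonneg fun j _ => h.1 i j

lemma IsSchedule.downloaded_eq_zero (h : M.IsSchedule x z) (hτ : τ < M.t i) :
    downloaded z i τ = 0 :=
  sum_eq_zero fun j hj => h.2.1 i j (Or.inl ((mem_Icc.1 hj).2.trans_lt hτ))

lemma IsSchedule.downloaded_eq (h : M.IsSchedule x z) (hi : i ∈ Icc 1 M.C) (hτ : M.d i ≤ τ) :
    downloaded z i τ = x i := by
  obtain ⟨-, hwindow, hsize, -, -⟩ := h
  rw [← hsize i hi]
  refine (sum_subset (Icc_subset_Icc_right hτ) fun j hj hj' => hwindow i j (Or.inr ?_)).symm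
  simp only [mem_Icc] at hj hj'
  omega

lemma IsSchedule.downloaded_le (h : M.IsSchedule x z) (hi : i ∈ Icc 1 M.C) (τ : ℕ) :
    downloaded z i τ ≤ x i :=
  (h.downloaded_mono i (le_max_left τ (M.d i))).trans_eq (h.downloaded_eq hi (le_max_right _ _))

lemma IsSchedule.sum_downloaded_succ_le (h : M.IsSchedule x z) (hS : S ⊆ Icc 1 M.C) (τ : ℕ) :
    ∑ i ∈ S, downloaded z i (τ + 1) ≤ ∑ i ∈ S, downloaded z i τ + M.B (τ + 1) := by
  obtain ⟨hnonneg, -, -, hbandwidth, -⟩ := h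
  simp only [downloaded_succ, sum_add_distrib]
  gcongr
  exact (sum_le_sum_of_subset_of_nonneg hS fun i _ _ => hnonneg i _).trans (hbandwidth _)

lemma IsSchedule.card_buffered_le (h : M.IsSchedule x z) (hS : S ⊆ Icc 1 M.C) (τ : ℕ) :
    #{i ∈ S | τ < M.d i ∧ 0 < downloaded z i τ} ≤ M.bufCap :=
  (card_le_card (filter_subset_filter _ hS)).trans (mul_le_Bm_iff.1 (h.2.2.2.2 τ))

lemma isSchedule_of_cumulative {c : ℕ → ℕ → ℝ} (hmono : ∀ i, Monotone (c i))
    (hrelease : ∀ i τ, τ < M.t i → c i τ = 0) (hdeadline : ∀ i τ, M.d i ≤ τ → c i τ = x i)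
    (hbandwidth : ∀ τ, ∑ i ∈ Icc 1 M.C, c i (τ + 1) ≤ ∑ i ∈ Icc 1 M.C, c i τ + M.B (τ + 1))
    (hbuffer : ∀ τ, #{i ∈ Icc 1 M.C | τ < M.d i ∧ 0 < c i τ} ≤ M.bufCap) :
    M.IsSchedule x fun i j => c i j - c i (j - 1) := by
  have hsum (i τ : ℕ) : ∑ j ∈ Icc 1 τ, (c i j - c i (j - 1)) = c i τ := by
    induction τ with
    | zero => simp [hrelease i 0 (M.ht i)]
    | succ τ ih => rw [sum_Icc_succ_top (by omega), ih]; simp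
  -- For `j = 0` the difference vanishes, since `j - 1 = 0` in `ℕ`.
  refine ⟨fun i j => sub_nonneg.2 (hmono i (Nat.sub_le j 1)), ?_, ?_, ?_, ?_⟩
  · rintro i j (hj | hj)
    · dsimp only
      rw [hrelease i j hj, hrelease i (j - 1) (by omega), sub_zero]
    · dsimp only
      rw [hdeadline i j hj.le, hdeadline i (j - 1) (by omega), sub_self]
  · intro i _
    rw [hsum, hdeadline i _ le_rfl]
  · rintro (_ | τ)
    · simpa using M.hB 0
    · rw [sum_sub_distrib, Nat.add_sub_cancel]
      linarith [hbandwidth τ]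
  · intro τ
    simp only [hsum]
    exact mul_le_Bm_iff.2 (hbuffer τ)

/-- `F τ` is a total amount of data of the chunks of `S` that may have been downloaded by slot `τ`:
it covers the chunks of `S` due by `τ`, and exceeds neither the chunks released by `τ` nor the
chunks due by `τ` together with a full buffer. -/
structure IsDownloadCurve (M : SchedModel) (X : ℝ) (S : Finset ℕ) (F : ℕ → ℝ) : Prop where
  mono : Monotone F
  bandwidth : ∀ τ, F (τ + 1) ≤ F τ + M.B (τ + 1)
  deadline : ∀ τ, X * countLE M.d S τ ≤ F τ
  release : ∀ τ, F τ ≤ X * countLE M.t S τ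
  buffer : ∀ τ, F τ ≤ X * (M.bufCap + countLE M.d S τ)

lemma IsSchedule.isDownloadCurve (hX : 0 ≤ X) (hS : S ⊆ Icc 1 M.C)
    (h : M.IsSchedule (fun i => if i ∈ S then X else 0) z) :
    M.IsDownloadCurve X S fun τ => ∑ i ∈ S, downloaded z i τ := by
  have hle : ∀ i ∈ S, ∀ τ, downloaded z i τ ≤ X := fun i hi τ => by
    simpa [hi] using h.downloaded_le (hS hi) τ
  refine ⟨?_, h.sum_downloaded_succ_le hS, fun τ => ?_, fun τ => ?_, fun τ => ?_⟩
  · exact fun a b hab => sum_le_sum fun i _ => h.downloaded_mono i hab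
  · rw [mul_countLE]
    refine sum_le_sum fun i hi => ?_
    split_ifs with hd
    · simp [h.downloaded_eq (hS hi) hd, hi]
    · exact h.downloaded_nonneg i τ
  · rw [mul_countLE]
    refine sum_le_sum fun i hi => ?_
    split_ifs with ht
    · exact hle i hi τ
    · exact (h.downloaded_eq_zero (not_le.1 ht)).le
  · calc ∑ i ∈ S, downloaded z i τ
        ≤ ∑ i ∈ S, ((if τ < M.d i ∧ 0 < downloaded z i τ then X else 0) +
            if M.d i ≤ τ then X else 0) := by
          refine sum_le_sum fun i hi => ?_
          have := hle i hi τ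
          -- If chunk `i` is not due by `τ`, it is either in the buffer or not yet started.
          grind
      _ = X * #{i ∈ S | τ < M.d i ∧ 0 < downloaded z i τ} + X * countLE M.d S τ := by
          rw [sum_add_distrib, ← mul_countLE, ← sum_filter, sum_const, nsmul_eq_mul, mul_comm]
      _ ≤ X * (M.bufCap + countLE M.d S τ) := by
          rw [mul_add]
          gcongr
          exact h.card_buffered_le hS τ

namespace IsDownloadCurve

variable {F F₁ F₂ : ℕ → ℝ}

lemma nonneg (h : M.IsDownloadCurve X S F) (hX : 0 ≤ X) (τ : ℕ) : 0 ≤ F τ :=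
  (mul_nonneg hX (Nat.cast_nonneg _)).trans (h.deadline τ)

lemma fifoCum_mono (h : M.IsDownloadCurve X S F) (hX : 0 ≤ X) (i : ℕ) :
    Monotone (fifoCum X S F i) := by
  intro a b hab
  unfold fifoCum
  split_ifs
  · exact fifo_mono hX (h.mono hab)
  · exact le_rfl

lemma fifoCum_eq_zero (h : M.IsDownloadCurve X S F) (hX : 0 ≤ X) (hτ : τ < M.t i) :
    fifoCum X S F i τ = 0 := by
  unfold fifoCum
  split_ifs
  · apply fifo_eq_zero hX
    calc F τ ≤ X * countLE M.t S τ := h.release τ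
      _ ≤ X * Nat.count (· ∈ S) i := by gcongr; exact countLE_le_count_mem M.tmono hτ
      _ = Nat.count (· ∈ S) i * X := mul_comm _ _
  · rfl

lemma fifoCum_eq (h : M.IsDownloadCurve X S F) (hX : 0 ≤ X) (hτ : M.d i ≤ τ) :
    fifoCum X S F i τ = if i ∈ S then X else 0 := by
  unfold fifoCum
  split_ifs with hi
  · apply fifo_eq_self hX
    calc (Nat.count (· ∈ S) i + 1 : ℝ) * X ≤ countLE M.d S τ * X := by
          gcongr
          exact_mod_cast count_mem_lt_countLE M.dmono hi hτ
      _ = X * countLE M.d S τ := mul_comm _ _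
      _ ≤ F τ := h.deadline τ
  · rfl

lemma sum_fifoCum (h : M.IsDownloadCurve X S F) (hX : 0 ≤ X) (hS : S ⊆ Icc 1 M.C) (τ : ℕ) :
    ∑ i ∈ Icc 1 M.C, fifoCum X S F i τ = F τ := by
  have hF : F τ ≤ #S * X :=
    calc F τ ≤ X * countLE M.t S τ := h.release τ
      _ ≤ X * #S := by gcongr; exact countLE_le_card
      _ = #S * X := mul_comm _ _
  calc ∑ i ∈ Icc 1 M.C, fifoCum X S F i τ
      = ∑ i ∈ S, fifo X (F τ) (Nat.count (· ∈ S) i) := by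
        simp only [fifoCum, ← sum_filter, filter_mem_eq_inter, inter_eq_right.2 hS]
    _ = min (F τ) (#S * X) := by
        rw [sum_count_mem (fifo X (F τ)), sum_fifo (h.nonneg hX τ)]
    _ = F τ := min_eq_left hF

/-- With `m` chunks due by slot `τ`, the buffered ones have ranks in `[m, m + bufCap)`. -/
lemma card_buffered_fifoCum_le (h : M.IsDownloadCurve X S F) (hX : 0 ≤ X) (U : Finset ℕ)
    (τ : ℕ) : #{i ∈ U | τ < M.d i ∧ 0 < fifoCum X S F i τ} ≤ M.bufCap := by
  have hmem : ∀ i ∈ {i ∈ U | τ < M.d i ∧ 0 < fifoCum X S F i τ}, i ∈ S := by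
    intro i hi
    by_contra hiS
    obtain ⟨-, -, hpos⟩ := mem_filter.1 hi
    simp [fifoCum, hiS] at hpos
  calc #{i ∈ U | τ < M.d i ∧ 0 < fifoCum X S F i τ}
      ≤ #(Ico (countLE M.d S τ) (M.bufCap + countLE M.d S τ)) := by
        refine card_le_card_of_injOn (Nat.count (· ∈ S)) (fun i hi => ?_)
          ((injOn_count_mem S).mono hmem)
        have hiS := hmem i hi
        obtain ⟨-, hd, hpos⟩ := mem_filter.1 hi
        refine mem_coe.2 (mem_Ico.2 ⟨countLE_le_count_mem M.dmono hd, ?_⟩)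
        by_contra! hrank
        have hF : F τ ≤ Nat.count (· ∈ S) i * X :=
          calc F τ ≤ X * (M.bufCap + countLE M.d S τ) := h.buffer τ
            _ ≤ X * Nat.count (· ∈ S) i := by gcongr; exact_mod_cast hrank
            _ = Nat.count (· ∈ S) i * X := mul_comm _ _
        simp [fifoCum, hiS, fifo_eq_zero hX hF] at hpos
    _ = M.bufCap := by simp

lemma feasibleSet (h : M.IsDownloadCurve X S F) (hX : 0 ≤ X) (hS : S ⊆ Icc 1 M.C) :
    M.FeasibleSet X S := by
  refine ⟨_, isSchedule_of_cumulative (h.fifoCum_mono hX) (fun _ _ => h.fifoCum_eq_zero hX)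
    (fun _ _ => h.fifoCum_eq hX) (fun τ => ?_) (h.card_buffered_fifoCum_le hX _)⟩
  simp only [h.sum_fifoCum hX hS]
  exact h.bandwidth τ

lemma insert_of_galeLE (h₁ : M.IsDownloadCurve X (insert n S) F₁)
    (h₂ : M.IsDownloadCurve X T F₂) (hX : 0 ≤ X) (hST : GaleLE S T) (hcard : #T ≤ #S)
    (hS : ∀ i ∈ S, n < i) (hT : ∀ i ∈ T, n < i) :
    M.IsDownloadCurve X (insert n T) fun τ => min (F₁ τ) (F₂ τ + X) := by
  have hcount {f : ℕ → ℕ} (hf : Monotone f) (τ : ℕ) : (countLE f (insert n T) τ : ℝ) =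
      min (countLE f (insert n S) τ : ℝ) (countLE f T τ + 1) := by
    exact_mod_cast hST.countLE_insert_eq_min hcard hS hT hf τ
  refine ⟨h₁.mono.min (h₂.mono.add_const X), fun τ => ?_, fun τ => ?_, fun τ => ?_, fun τ => ?_⟩
  · rw [← min_add_add_right]
    exact min_le_min (h₁.bandwidth τ) (by linarith [h₂.bandwidth τ])
  · rw [hcount M.dmono, mul_min_of_nonneg _ _ hX]
    exact min_le_min (h₁.deadline τ) (by linarith [h₂.deadline τ])
  · rw [hcount M.tmono, mul_min_of_nonneg _ _ hX]
    exact min_le_min (h₁.release τ) (by linarith [h₂.release τ])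
  · rw [hcount M.dmono, ← min_add_add_left, mul_min_of_nonneg _ _ hX]
    exact min_le_min (h₁.buffer τ) (by linarith [h₂.buffer τ])

end IsDownloadCurve

lemma feasibleSet_iff_exists_isDownloadCurve (hX : 0 ≤ X) (hS : S ⊆ Icc 1 M.C) :
    M.FeasibleSet X S ↔ ∃ F, M.IsDownloadCurve X S F :=
  ⟨fun ⟨_, hz⟩ => ⟨_, hz.isDownloadCurve hX hS⟩, fun ⟨_, hF⟩ => hF.feasibleSet hX hS⟩

lemma feasibleSet_empty : M.FeasibleSet X ∅ :=
  ⟨0, by simp [IsSchedule, M.hB, M.hBm.le]⟩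

lemma FeasibleSet.mono (h : M.FeasibleSet X T) (hST : S ⊆ T) : M.FeasibleSet X S := by
  obtain ⟨z, hnonneg, hwindow, hsize, hbandwidth, hbuffer⟩ := h
  have hle (i j : ℕ) : (if i ∈ S then z i j else 0) ≤ z i j := by
    split_ifs
    exacts [le_rfl, hnonneg i j]
  refine ⟨fun i j => if i ∈ S then z i j else 0, fun i j => ?_, fun i j hj => ?_, fun i hi => ?_,
    fun j => (sum_le_sum fun i _ => hle i j).trans (hbandwidth j), fun τ => ?_⟩
  · dsimp only
    split_ifs
    exacts [hnonneg i j, le_rfl]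
  · simp [hwindow i j hj]
  · by_cases hiS : i ∈ S
    · simpa [hiS, hST hiS] using hsize i hi
    · simp [hiS]
  · refine le_trans ?_ (hbuffer τ)
    have := M.hL
    gcongr with i _ _ j
    exact hle i j

lemma FeasibleSet.insert_of_galeLE (h : M.FeasibleSet X (insert n S)) (hT : M.FeasibleSet X T)
    (hX : 0 ≤ X) (hS : insert n S ⊆ Icc 1 M.C) (hTC : T ⊆ Icc 1 M.C) (hST : GaleLE S T)
    (hcard : #T ≤ #S) (hnS : ∀ i ∈ S, n < i) (hnT : ∀ i ∈ T, n < i) :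
    M.FeasibleSet X (insert n T) := by
  obtain ⟨F₁, h₁⟩ := (feasibleSet_iff_exists_isDownloadCurve hX hS).1 h
  obtain ⟨F₂, h₂⟩ := (feasibleSet_iff_exists_isDownloadCurve hX hTC).1 hT
  exact (h₁.insert_of_galeLE h₂ hX hST hcard hnS hnT).feasibleSet hX
    (insert_subset (hS (mem_insert_self n S)) hTC)

lemma backGreedyAux_succ_of_feasibleSet {k : ℕ}
    (h : M.FeasibleSet X (insert (M.C - k) (M.backGreedyAux X k))) :
    M.backGreedyAux X (k + 1) = insert (M.C - k) (M.backGreedyAux X k) := if_pos h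

lemma backGreedyAux_succ_of_not_feasibleSet {k : ℕ}
    (h : ¬ M.FeasibleSet X (insert (M.C - k) (M.backGreedyAux X k))) :
    M.backGreedyAux X (k + 1) = M.backGreedyAux X k := if_neg h

lemma backGreedyAux_subset_succ (k : ℕ) : M.backGreedyAux X k ⊆ M.backGreedyAux X (k + 1) := by
  by_cases h : M.FeasibleSet X (insert (M.C - k) (M.backGreedyAux X k))
  · rw [backGreedyAux_succ_of_feasibleSet h]
    exact subset_insert _ _
  · rw [backGreedyAux_succ_of_not_feasibleSet h]

lemma feasibleSet_backGreedyAux (k : ℕ) : M.FeasibleSet X (M.backGreedyAux X k) := by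
  induction k with
  | zero => exact feasibleSet_empty
  | succ k ih =>
    by_cases h : M.FeasibleSet X (insert (M.C - k) (M.backGreedyAux X k))
    · rwa [backGreedyAux_succ_of_feasibleSet h]
    · rwa [backGreedyAux_succ_of_not_feasibleSet h]

lemma backGreedyAux_subset_Ioc {k : ℕ} (hk : k ≤ M.C) :
    M.backGreedyAux X k ⊆ Ioc (M.C - k) M.C := by
  induction k with
  | zero => simp [backGreedyAux]
  | succ k ih =>
    have hsub : M.backGreedyAux X k ⊆ Ioc (M.C - (k + 1)) M.C :=
      (ih (by omega)).trans (Ioc_subset_Ioc_left (by omega))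
    by_cases h : M.FeasibleSet X (insert (M.C - k) (M.backGreedyAux X k))
    · rw [backGreedyAux_succ_of_feasibleSet h]
      exact insert_subset (mem_Ioc.2 (by omega)) hsub
    · rwa [backGreedyAux_succ_of_not_feasibleSet h]

lemma backGreedy_subset : M.backGreedy X ⊆ Icc 1 M.C := by
  have h := backGreedyAux_subset_Ioc (M := M) (X := X) le_rfl
  rwa [Nat.sub_self, ← Icc_add_one_left_eq_Ioc] at h

lemma insert_galeLE_backGreedyAux_succ (hX : 0 ≤ X) {k : ℕ} (hk : k < M.C)
    (hS : S ⊆ Ioc (M.C - k) M.C) (hfeas : M.FeasibleSet X (insert (M.C - k) S))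
    (h : GaleLE S (M.backGreedyAux X k)) :
    GaleLE (insert (M.C - k) S) (M.backGreedyAux X (k + 1)) := by
  have hG : M.backGreedyAux X k ⊆ Ioc (M.C - k) M.C := backGreedyAux_subset_Ioc hk.le
  have hlt {T : Finset ℕ} (hT : T ⊆ Ioc (M.C - k) M.C) : ∀ i ∈ T, M.C - k < i :=
    fun i hi => (mem_Ioc.1 (hT hi)).1
  by_cases hins : M.FeasibleSet X (insert (M.C - k) (M.backGreedyAux X k))
  · rw [backGreedyAux_succ_of_feasibleSet hins]
    exact h.insert_insert fun hn => (hlt hG _ hn).false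
  · rw [backGreedyAux_succ_of_not_feasibleSet hins]
    refine h.insert_left ?_ fun i hi => (hlt hG i hi).le
    by_contra! hcard
    have hIoc : Ioc (M.C - k) M.C ⊆ Icc 1 M.C := fun i => by
      simp only [mem_Ioc, mem_Icc]
      omega
    exact hins (hfeas.insert_of_galeLE (feasibleSet_backGreedyAux k) hX
      (insert_subset (mem_Icc.2 (by omega)) (hS.trans hIoc)) (hG.trans hIoc) h hcard
      (hlt hS) (hlt hG))

lemma filter_galeLE_backGreedyAux (hX : 0 ≤ X) (hS : S ⊆ Icc 1 M.C) (hfeas : M.FeasibleSet X S)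
    {k : ℕ} (hk : k ≤ M.C) : GaleLE {i ∈ S | M.C - k < i} (M.backGreedyAux X k) := by
  induction k with
  | zero =>
    rw [filter_eq_empty_iff.2 fun i hi => by have := mem_Icc.1 (hS hi); omega]
    exact .of_subset (empty_subset _)
  | succ k ih =>
    have ih := ih (by omega)
    have hlt_iff (i : ℕ) : M.C - (k + 1) < i ↔ i = M.C - k ∨ M.C - k < i := by omega
    by_cases hn : M.C - k ∈ S
    · have hinsert : {i ∈ S | M.C - (k + 1) < i} = insert (M.C - k) {i ∈ S | M.C - k < i} := by
        simp only [hlt_iff, filter_or, filter_eq', if_pos hn, insert_eq]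
      rw [hinsert]
      refine insert_galeLE_backGreedyAux_succ hX hk (fun i hi => ?_) (hfeas.mono ?_) ih
      · rw [mem_filter] at hi
        exact mem_Ioc.2 ⟨hi.2, (mem_Icc.1 (hS hi.1)).2⟩
      · exact hinsert ▸ filter_subset _ _
    · have hsame : {i ∈ S | M.C - (k + 1) < i} = {i ∈ S | M.C - k < i} := by
        simp only [hlt_iff, filter_or, filter_eq', if_neg hn, empty_union]
      rw [hsame]
      exact ih.trans (.of_subset (backGreedyAux_subset_succ k))

theorem FeasibleSet.galeLE_backGreedy (hfeas : M.FeasibleSet X S) (hX : 0 ≤ X)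
    (hS : S ⊆ Icc 1 M.C) : GaleLE S (M.backGreedy X) := by
  have h := filter_galeLE_backGreedyAux hX hS hfeas le_rfl
  rwa [Nat.sub_self, filter_true_of_mem fun i hi => Nat.one_pos.trans_le (mem_Icc.1 (hS hi)).1] at h

end SchedModel

/-- the backward greedy pushes all skips toward lower-index chunks:
if `S` is feasible with `|S| = |G|` and `i_1 < … < i_H` (resp. `j_1 < … < j_H`) are
the chunks skipped by the backward greedy `G` (resp. by `S`), then `i_k ≤ j_k` for
every `k`. -/
theorem backward_greedy_skips_earliest (M : SchedModel) (X : ℝ) (hX : 0 < X)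
    (S : Finset ℕ) (hS : S ⊆ Finset.Icc 1 M.C) (hfeas : M.FeasibleSet X S)
    (hcard : S.card = (M.backGreedy X).card) (H : ℕ)
    (hG : ((Finset.Icc 1 M.C) \ M.backGreedy X).card = H)
    (hS' : ((Finset.Icc 1 M.C) \ S).card = H) :
    ∀ k : Fin H,
      ((((Finset.Icc 1 M.C) \ M.backGreedy X).orderIsoOfFin hG k : ℕ)) ≤
        ((((Finset.Icc 1 M.C) \ S).orderIsoOfFin hS' k : ℕ)) := by
  intro k
  have hskips : GaleLE (Icc 1 M.C \ M.backGreedy X) (Icc 1 M.C \ S) :=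
    (hfeas.galeLE_backGreedy hX.le hS).sdiff SchedModel.backGreedy_subset
  exact hskips.orderEmbOfFin_le hG hS' k
end

section
/- (Lemma 2) In the scheduling model with common chunk size X > 0 and any weight β ≥ 1, the backward greedy selection G maximizes the geometrically weighted sum of fetched chunk sizes: for every feasible set S ⊆ {1,…,C}, Σ_{i∈S} β^i · X ≤ Σ_{i∈G} β^i · X. -/
open scoped Classical

/-!
Let `K = ⌊Bm / L⌋` and let `N τ σ` be the number of whole chunks which the slots `τ+1, …, σ` can
carry. A set `S` of chunks is feasible iff for all `τ` and `σ`

* `#{i ∈ S | τ < t i, d i ≤ σ} ≤ N τ σ`, and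
* `#{i ∈ S | τ < d i, d i ≤ σ} ≤ N τ σ + K`.

For necessity, at most `K` of the chunks in the second bound are already started at time `τ`. For
sufficiency, time is reversed: the chunks arrive at their deadlines and are served without idling,
in decreasing order of index. The work this policy does after slot `τ` is given by the usual
formula for a queue, and the two bounds say exactly that it is enough to respect the window openings
and the buffer. Since chunks are served one after the other, at most one is partially downloaded
at any time, and this is what makes an integral `K` sufficient.

As `t` and `d` are monotone, the bounds limit the number of elements of `S` in certain intervals of
indices. For such bounds the greedy selection `G` stays ahead: above every index `m`, it has at
least as many elements as `S`. Indeed, if `m` were the largest index at which `G` falls behind, then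
an interval containing `m` would hold at most as many elements of `insert m {l ∈ G | m < l}` as of
`S`, and `G` would contain `m`. Weights which increase with the index are then compared by matching
the two sets from the top.
-/

section IntervalBounds

open Finset

variable {α : Type*}

/-- `S` obeys the system `𝓑` of cardinality bounds, in which a pair `(I, n)` stands for the
condition that at most `n` elements of `S` lie in `I`. -/
def ObeysBounds (𝓑 : Set (Set α × ℕ)) (S : Finset α) : Prop :=
  ∀ b ∈ 𝓑, #{i ∈ S | i ∈ b.1} ≤ b.2

lemma ObeysBounds.mono {𝓑 : Set (Set α × ℕ)} {S T : Finset α} (hT : ObeysBounds 𝓑 T)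
    (hST : S ⊆ T) : ObeysBounds 𝓑 S :=
  fun b hb => (card_le_card (filter_subset_filter _ hST)).trans (hT b hb)

variable [LinearOrder α]

lemma sum_le_sum_of_card_filter_le {N : Type*} [AddCommMonoid N] [PartialOrder N]
    [IsOrderedAddMonoid N] {w : α → N} (hw : Monotone w) (hw₀ : 0 ≤ w) {S G : Finset α}
    (h : ∀ m ∈ S, #{i ∈ S | m ≤ i} ≤ #{i ∈ G | m ≤ i}) : ∑ i ∈ S, w i ≤ ∑ i ∈ G, w i := by
  induction S using Finset.induction_on_max generalizing G with
  | empty => simpa using sum_nonneg fun i _ => hw₀ i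
  | insert a s hs ih =>
    have ha : a ∉ s := fun has => (hs a has).false
    obtain ⟨b, hbG, hab⟩ : ∃ b ∈ G, a ≤ b := by
      have hpos : 0 < #{i ∈ G | a ≤ i} :=
        (card_pos.2 ⟨a, by simp⟩).trans_le (h a (mem_insert_self a s))
      simpa [Finset.Nonempty] using card_pos.1 hpos
    rw [sum_insert ha, ← add_sum_erase G w hbG]
    refine add_le_add (hw hab) (ih fun m hm => ?_)
    have hmb : b ∈ {i ∈ G | m ≤ i} := mem_filter.2 ⟨hbG, (hs m hm).le.trans hab⟩
    have hm' := h m (mem_insert_of_mem hm)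
    rw [filter_insert, if_pos (hs m hm).le, card_insert_of_notMem (by simp [ha])] at hm'
    rw [filter_erase, card_erase_of_mem hmb]
    exact Nat.le_sub_one_of_lt hm'

lemma card_filter_le_of_isUpperSet {S G : Finset α} {U : Set α} (hU : IsUpperSet U)
    (h : ∀ m ∈ S, m ∈ U → #{i ∈ S | m ≤ i} ≤ #{i ∈ G | m ≤ i}) :
    #{i ∈ S | i ∈ U} ≤ #{i ∈ G | i ∈ U} := by
  obtain hS | hS := {i ∈ S | i ∈ U}.eq_empty_or_nonempty
  · simp [hS]
  obtain ⟨m, hm, hmin⟩ := exists_min_image _ id hS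
  obtain ⟨hmS, hmU⟩ := mem_filter.1 hm
  calc #{i ∈ S | i ∈ U} ≤ #{i ∈ S | m ≤ i} :=
        card_le_card fun i hi => mem_filter.2 ⟨(mem_filter.1 hi).1, hmin i hi⟩
    _ ≤ #{i ∈ G | m ≤ i} := h m hmS hmU
    _ ≤ #{i ∈ G | i ∈ U} := card_le_card (monotone_filter_right G fun i _ hi => hU hi hmU)

lemma ObeysBounds.insert_of_card_lt {𝓑 : Set (Set α × ℕ)} (h𝓑 : ∀ b ∈ 𝓑, b.1.OrdConnected)
    {S G : Finset α} (hS : ObeysBounds 𝓑 S) (hG : ObeysBounds 𝓑 G) {m : α}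
    (hm : #{i ∈ G | m ≤ i} < #{i ∈ S | m ≤ i})
    (htail : ∀ l ∈ S, m < l → #{i ∈ S | l ≤ i} ≤ #{i ∈ G | l ≤ i}) :
    ObeysBounds 𝓑 (insert m {l ∈ G | m < l}) := by
  rintro ⟨I, n⟩ hb
  by_cases hmI : m ∈ I
  · have hU : IsUpperSet {l | m < l ∧ l ∉ I} := fun a c hac ⟨hma, haI⟩ =>
      ⟨hma.trans_le hac, fun hcI => haI ((h𝓑 _ hb).out hmI hcI ⟨hma.le, hac⟩)⟩
    have hU_le := card_filter_le_of_isUpperSet hU fun l hl hlU => htail l hl hlU.1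
    have hG_split : #{i ∈ G | m < i ∧ i ∈ I} + #{i ∈ G | m < i ∧ i ∉ I} ≤ #{i ∈ G | m ≤ i} := by
      rw [← filter_filter, ← filter_filter, card_filter_add_card_filter_not]
      exact card_le_card (monotone_filter_right G fun i _ hi => le_of_lt hi)
    have hS_split : #{i ∈ S | m ≤ i} ≤ #{i ∈ S | i ∈ I} + #{i ∈ S | m < i ∧ i ∉ I} := by
      refine (card_le_card fun i hi => ?_).trans (card_union_le _ _)
      grind
    have h_insert : #{i ∈ insert m {l ∈ G | m < l} | i ∈ I} ≤ #{i ∈ G | m < i ∧ i ∈ I} + 1 := by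
      rw [filter_insert, if_pos hmI, filter_filter]
      exact card_insert_le _ _
    have hSn : #{i ∈ S | i ∈ I} ≤ n := hS _ hb
    simp only [Set.mem_ofPred_eq] at hU_le
    dsimp only
    omega
  · rw [filter_insert, if_neg hmI]
    exact (hG.mono (filter_subset _ _)) _ hb

/-- `G` is the selection made from `T` by processing its elements in decreasing order and keeping
each one which has the property `P` together with those kept before. -/
def IsBackwardGreedy (P : Finset α → Prop) (T G : Finset α) : Prop :=
  G ⊆ T ∧ ∀ i ∈ T, i ∈ G ↔ P (insert i {l ∈ G | i < l})

namespace IsBackwardGreedy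

variable {P Q : Finset α → Prop} {T G : Finset α}

lemma congr (h : ∀ S ⊆ T, P S ↔ Q S) (hG : IsBackwardGreedy P T G) : IsBackwardGreedy Q T G :=
  ⟨hG.1, fun i hi => (hG.2 i hi).trans
    (h _ (insert_subset hi ((filter_subset _ _).trans hG.1)))⟩

lemma of_nonempty (hG : IsBackwardGreedy P T G) (hne : G.Nonempty) : P G := by
  obtain ⟨i, hi, hmin⟩ := exists_min_image G id hne
  have hins : insert i {l ∈ G | i < l} = G := by
    ext l
    have := hmin l
    grind
  exact hins ▸ (hG.2 i (hG.1 hi)).1 hi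

lemma insert_of_forall_lt {i : α} [Decidable (P (insert i G))] (hG : IsBackwardGreedy P T G)
    (hi : ∀ l ∈ T, i < l) :
    IsBackwardGreedy P (insert i T) (if P (insert i G) then insert i G else G) := by
  have hiG : i ∉ G := fun h => (hi i (hG.1 h)).false
  have hfilter : {l ∈ G | i < l} = G := filter_true_of_mem fun l hl => hi l (hG.1 hl)
  split_ifs with hP
  · refine ⟨insert_subset_insert i hG.1, fun l hl => ?_⟩
    obtain rfl | hlT := mem_insert.1 hl
    · simpa [filter_insert, hfilter] using hP
    · rw [filter_insert, if_neg (hi l hlT).le.not_gt, ← hG.2 l hlT, mem_insert,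
        or_iff_right (hi l hlT).ne']
  · refine ⟨hG.1.trans (subset_insert i T), fun l hl => ?_⟩
    obtain rfl | hlT := mem_insert.1 hl
    · simp [hfilter, hP, hiG]
    · exact hG.2 l hlT

lemma card_filter_le {𝓑 : Set (Set α × ℕ)} (hG : IsBackwardGreedy (ObeysBounds 𝓑) T G)
    (h𝓑 : ∀ b ∈ 𝓑, b.1.OrdConnected) {S : Finset α} (hST : S ⊆ T) (hS : ObeysBounds 𝓑 S) :
    ∀ m ∈ S, #{i ∈ S | m ≤ i} ≤ #{i ∈ G | m ≤ i} := by
  have hG_obeys : ObeysBounds 𝓑 G :=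
    G.eq_empty_or_nonempty.elim (fun h => hS.mono (h ▸ empty_subset S)) hG.of_nonempty
  by_contra! hbad
  obtain ⟨m, hm, hmax⟩ := exists_max_image {m ∈ S | #{i ∈ G | m ≤ i} < #{i ∈ S | m ≤ i}} id
    (by simpa [Finset.Nonempty] using hbad)
  obtain ⟨hmS, hm_lt⟩ := mem_filter.1 hm
  have htail : ∀ l ∈ S, m < l → #{i ∈ S | l ≤ i} ≤ #{i ∈ G | l ≤ i} := fun l hl hml =>
    le_of_not_gt fun hlt => (hmax l (mem_filter.2 ⟨hl, hlt⟩)).not_gt hml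
  have hmG : m ∈ G := (hG.2 m (hST hmS)).2 (hS.insert_of_card_lt h𝓑 hG_obeys hm_lt htail)
  have h_above : #{i ∈ S | m < i} ≤ #{i ∈ G | m < i} := by
    simpa only [Set.mem_Ioi] using card_filter_le_of_isUpperSet (isUpperSet_Ioi m) htail
  have split_at {A : Finset α} (hmA : m ∈ A) : #{i ∈ A | m ≤ i} = #{i ∈ A | m < i} + 1 := by
    rw [← card_insert_of_notMem (a := m) (by simp)]
    congr 1
    grind
  rw [split_at hmS, split_at hmG] at hm_lt
  omega

end IsBackwardGreedy

end IntervalBounds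

section RankAbove

open Finset

variable {α : Type*} [LinearOrder α]

/-- The number of elements of `S` above `i`: the position of `i` when `S` is listed in decreasing
order, counted from `0`. -/
def rankAbove (S : Finset α) (i : α) : ℕ := #{k ∈ S | i < k}

lemma sum_rankAbove {N : Type*} [AddCommMonoid N] (S : Finset α) (g : ℕ → N) :
    ∑ i ∈ S, g (rankAbove S i) = ∑ r ∈ range #S, g r := by
  induction S using Finset.induction_on_min with
  | empty => simp
  | insert a s hs ih =>
    have ha : a ∉ s := fun has => (hs a has).false
    have h_self : rankAbove (insert a s) a = #s := by
      rw [rankAbove, filter_insert, if_neg (lt_irrefl a), filter_true_of_mem hs]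
    have h_other : ∀ i ∈ s, rankAbove (insert a s) i = rankAbove s i := fun i hi => by
      rw [rankAbove, rankAbove, filter_insert, if_neg (hs i hi).not_gt]
    rw [sum_insert ha, card_insert_of_notMem ha, sum_range_succ, ← ih, h_self, add_comm]
    exact congrArg (· + g #s) (sum_congr rfl fun i hi => by rw [h_other i hi])

/-- The part of a total amount `w` that goes to the item at position `r`, counted from `0`, when
items of size `X` are filled one after the other. -/
noncomputable def share (X : ℝ) (r : ℕ) (w : ℝ) : ℝ := min w (X * (r + 1)) - min w (X * r)

variable {X : ℝ}

lemma share_mono (hX : 0 < X) (r : ℕ) : Monotone (share X r) := fun v w hvw => by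
  have : X * r ≤ X * (r + 1) := by gcongr; linarith
  unfold share
  grind

lemma share_eq_zero (hX : 0 < X) {r : ℕ} {w : ℝ} (h : w ≤ X * r) : share X r w = 0 := by
  rw [share, min_eq_left h, min_eq_left (by linarith), sub_self]

lemma share_eq_self (hX : 0 < X) {r : ℕ} {w : ℝ} (h : X * (r + 1) ≤ w) : share X r w = X := by
  rw [share, min_eq_right h, min_eq_right (by linarith)]
  ring

lemma sum_share {S : Finset α} {w : ℝ} (hw : 0 ≤ w) (hwS : w ≤ X * #S) :
    ∑ i ∈ S, share X (rankAbove S i) w = w := by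
  rw [sum_rankAbove S (share X · w)]
  have := sum_range_sub (fun r : ℕ => min w (X * r)) #S
  simpa [share, hw, hwS] using this

end RankAbove

namespace SchedModel

open Finset

/-- The total bandwidth of the slots `τ+1, …, σ`; it is `0` if `σ ≤ τ`. -/
noncomputable def bandwidth (M : SchedModel) (τ σ : ℕ) : ℝ := ∑ j ∈ Ioc τ σ, M.B j

/-- The number of chunks that fit into the playback buffer. -/
noncomputable def bufferCap (M : SchedModel) : ℕ := ⌊M.Bm / M.L⌋₊

/-- The number of chunks of size `X` that the slots `τ+1, …, σ` can carry. -/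
noncomputable def slotCap (M : SchedModel) (X : ℝ) (τ σ : ℕ) : ℕ := ⌊M.bandwidth τ σ / X⌋₊

/-- The bounds which characterize feasibility, on the chunks whose window lies in the slots
`τ+1, …, σ` and on those whose deadline does. -/
def intervalBounds (M : SchedModel) (X : ℝ) : Set (Set ℕ × ℕ) :=
  {b | ∃ τ σ, b = ({i | τ < M.t i ∧ M.d i ≤ σ}, M.slotCap X τ σ) ∨
    b = ({i | τ < M.d i ∧ M.d i ≤ σ}, M.slotCap X τ σ + M.bufferCap)}

variable {M : SchedModel} {X : ℝ} {S : Finset ℕ} {i τ σ : ℕ}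

lemma ordConnected_of_mem_intervalBounds {b : Set ℕ × ℕ} (hb : b ∈ M.intervalBounds X) :
    b.1.OrdConnected := by
  obtain ⟨τ, σ, rfl | rfl⟩ := hb
  · exact ⟨fun a ha c hc l hl =>
      ⟨ha.1.trans_le (M.tmono hl.1), (M.dmono hl.2).trans hc.2⟩⟩
  · exact ⟨fun a ha c hc l hl =>
      ⟨ha.1.trans_le (M.dmono hl.1), (M.dmono hl.2).trans hc.2⟩⟩

lemma obeysBounds_intervalBounds_iff : ObeysBounds (M.intervalBounds X) S ↔ ∀ τ σ,
    #{i ∈ S | τ < M.t i ∧ M.d i ≤ σ} ≤ M.slotCap X τ σ ∧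
    #{i ∈ S | τ < M.d i ∧ M.d i ≤ σ} ≤ M.slotCap X τ σ + M.bufferCap := by
  constructor
  · intro h τ σ
    exact ⟨by simpa using h _ ⟨τ, σ, Or.inl rfl⟩, by simpa using h _ ⟨τ, σ, Or.inr rfl⟩⟩
  · rintro h _ ⟨τ, σ, rfl | rfl⟩
    · simpa using (h τ σ).1
    · simpa using (h τ σ).2

lemma bandwidth_nonneg : 0 ≤ M.bandwidth τ σ := sum_nonneg fun j _ => M.hB j

lemma bandwidth_succ_le : M.bandwidth (τ + 1) σ ≤ M.bandwidth τ σ :=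
  sum_le_sum_of_subset_of_nonneg (Ioc_subset_Ioc_left τ.le_succ) fun j _ _ => M.hB j

lemma bandwidth_le_add_succ : M.bandwidth τ σ ≤ M.B (τ + 1) + M.bandwidth (τ + 1) σ := by
  rw [bandwidth, bandwidth, ← sum_insert (by simp)]
  refine sum_le_sum_of_subset_of_nonneg (fun j hj => ?_) fun j _ _ => M.hB j
  simp only [mem_insert, mem_Ioc] at hj ⊢
  omega

lemma le_bufferCap_iff {n : ℕ} : n ≤ M.bufferCap ↔ M.L * n ≤ M.Bm := by
  rw [bufferCap, Nat.le_floor_iff (div_nonneg M.hBm.le M.hL.le), le_div_iff₀' M.hL]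

lemma le_slotCap_iff (hX : 0 < X) {n : ℕ} : n ≤ M.slotCap X τ σ ↔ X * n ≤ M.bandwidth τ σ := by
  rw [slotCap, Nat.le_floor_iff (div_nonneg bandwidth_nonneg hX.le), le_div_iff₀' hX]

lemma card_le_slotCap_of_isSchedule (hX : 0 < X) {z : ℕ → ℕ → ℝ}
    (hz : M.IsSchedule (fun i => if i ∈ S then X else 0) z) (hS : S ⊆ Icc 1 M.C)
    {Q : Finset ℕ} (hQS : Q ⊆ S) (hQd : ∀ i ∈ Q, M.d i ≤ σ)
    (hQτ : ∀ i ∈ Q, ∀ j ∈ Icc 1 τ, z i j = 0) : #Q ≤ M.slotCap X τ σ := by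
  obtain ⟨hz_nonneg, -, hz_size, hz_band, -⟩ := hz
  have size_le : ∀ i ∈ Q, X ≤ ∑ j ∈ Ioc τ σ, z i j := fun i hi => by
    have hsize := hz_size i (hS (hQS hi))
    simp only [if_pos (hQS hi)] at hsize
    rw [← hsize, ← sum_filter_ne_zero]
    refine sum_le_sum_of_subset_of_nonneg (fun j hj => ?_) fun j _ _ => hz_nonneg i j
    obtain ⟨hj, hj_ne⟩ := mem_filter.1 hj
    obtain ⟨hj_pos, hjd⟩ := mem_Icc.1 hj
    exact mem_Ioc.2 ⟨lt_of_not_ge fun hjτ => hj_ne (hQτ i hi j (mem_Icc.2 ⟨hj_pos, hjτ⟩)),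
      hjd.trans (hQd i hi)⟩
  rw [le_slotCap_iff hX]
  calc X * #Q = ∑ _i ∈ Q, X := by rw [sum_const, nsmul_eq_mul, mul_comm]
    _ ≤ ∑ i ∈ Q, ∑ j ∈ Ioc τ σ, z i j := sum_le_sum size_le
    _ = ∑ j ∈ Ioc τ σ, ∑ i ∈ Q, z i j := sum_comm
    _ ≤ M.bandwidth τ σ := sum_le_sum fun j _ =>
      (sum_le_sum_of_subset_of_nonneg (hQS.trans hS) fun i _ _ => hz_nonneg i j).trans (hz_band j)

lemma obeysBounds_of_feasibleSet (hX : 0 < X) (hS : S ⊆ Icc 1 M.C) (hF : M.FeasibleSet X S) :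
    ObeysBounds (M.intervalBounds X) S := by
  obtain ⟨z, hz⟩ := hF
  obtain ⟨hz_nonneg, hz_window, -, -, hz_buffer⟩ := id hz
  refine obeysBounds_intervalBounds_iff.2 fun τ σ => ⟨?_, ?_⟩
  · refine card_le_slotCap_of_isSchedule hX hz hS (filter_subset _ _)
      (fun i hi => (mem_filter.1 hi).2.2) fun i hi j hj => hz_window i j (Or.inl ?_)
    exact (mem_Icc.1 hj).2.trans_lt (mem_filter.1 hi).2.1
  · set U := {i ∈ S | τ < M.d i ∧ M.d i ≤ σ}
    have h_fresh : #{i ∈ U | ¬ 0 < ∑ j ∈ Icc 1 τ, z i j} ≤ M.slotCap X τ σ := by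
      refine card_le_slotCap_of_isSchedule hX hz hS
        ((filter_subset _ _).trans (filter_subset _ _))
        (fun i hi => (mem_filter.1 (mem_filter.1 hi).1).2.2) fun i hi => ?_
      exact (sum_eq_zero_iff_of_nonneg fun j _ => hz_nonneg i j).1
        ((not_lt.1 (mem_filter.1 hi).2).antisymm (sum_nonneg fun j _ => hz_nonneg i j))
    have h_started : #{i ∈ U | 0 < ∑ j ∈ Icc 1 τ, z i j} ≤ M.bufferCap := by
      refine (card_le_card fun i hi => ?_).trans (le_bufferCap_iff.2 (hz_buffer τ))
      obtain ⟨hiU, hpos⟩ := mem_filter.1 hi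
      obtain ⟨hiS, hd, -⟩ := mem_filter.1 hiU
      exact mem_filter.2 ⟨hS hiS, hd, hpos⟩
    rw [← card_filter_add_card_filter_not (s := U) (fun i => 0 < ∑ j ∈ Icc 1 τ, z i j), add_comm]
    exact add_le_add h_fresh h_started

/-- The size of all chunks of `S` with deadline after slot `τ`, that is, the work which has arrived
in reversed time when the slots after `τ` have been used. -/
noncomputable def demand (M : SchedModel) (X : ℝ) (S : Finset ℕ) (τ : ℕ) : ℝ :=
  X * #{i ∈ S | τ < M.d i}

/-- The work done in the slots after `τ` by the policy that serves the demand in reversed time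
without idling. The infimum is attained at the first `σ ≥ τ` for which no work is waiting
when the slots after `σ` have been used; terms with `σ < τ` are at least the one with `σ = τ`. -/
noncomputable def work (M : SchedModel) (X : ℝ) (S : Finset ℕ) (τ : ℕ) : ℝ :=
  ⨅ σ, (M.bandwidth τ σ + M.demand X S σ)

lemma demand_nonneg (hX : 0 < X) : 0 ≤ M.demand X S τ := mul_nonneg hX.le (Nat.cast_nonneg _)

lemma work_le (hX : 0 < X) (σ : ℕ) : M.work X S τ ≤ M.bandwidth τ σ + M.demand X S σ :=
  ciInf_le ⟨0, Set.forall_mem_range.2 fun _ => add_nonneg bandwidth_nonneg (demand_nonneg hX)⟩ σ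

lemma work_nonneg (hX : 0 < X) : 0 ≤ M.work X S τ :=
  le_ciInf fun _ => add_nonneg bandwidth_nonneg (demand_nonneg hX)

lemma work_le_demand (hX : 0 < X) : M.work X S τ ≤ M.demand X S τ := by
  simpa [bandwidth] using work_le (M := M) (S := S) (τ := τ) hX τ

lemma work_succ_le (hX : 0 < X) : M.work X S (τ + 1) ≤ M.work X S τ :=
  le_ciInf fun σ => (work_le hX σ).trans (by gcongr; exact bandwidth_succ_le)

lemma work_sub_work_succ_le (hX : 0 < X) : M.work X S τ - M.work X S (τ + 1) ≤ M.B (τ + 1) := by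
  rw [sub_le_comm]
  refine le_ciInf fun σ => ?_
  rw [sub_le_iff_le_add', ← add_assoc]
  exact (work_le hX σ).trans (by gcongr; exact bandwidth_le_add_succ)

lemma mul_card_filter_le_add_demand (M : SchedModel) (hX : 0 < X) (p : ℕ → Prop) [DecidablePred p]
    (σ : ℕ) :
    X * #{i ∈ S | p i} ≤ X * #{i ∈ S | p i ∧ M.d i ≤ σ} + M.demand X S σ := by
  rw [demand, ← mul_add, ← Nat.cast_add]
  gcongr
  refine (card_le_card fun i hi => ?_).trans (card_union_le _ _)
  grind

lemma mul_card_opening_le_work (hX : 0 < X) (hS : ObeysBounds (M.intervalBounds X) S) :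
    X * #{i ∈ S | τ < M.t i} ≤ M.work X S τ := by
  refine le_ciInf fun σ => (M.mul_card_filter_le_add_demand hX _ σ).trans ?_
  gcongr
  exact (le_slotCap_iff hX).1 (obeysBounds_intervalBounds_iff.1 hS τ σ).1

lemma demand_le_work_add (hX : 0 < X) (hS : ObeysBounds (M.intervalBounds X) S) :
    M.demand X S τ ≤ M.work X S τ + X * M.bufferCap := by
  rw [← sub_le_iff_le_add]
  refine le_ciInf fun σ => sub_le_iff_le_add.2 ?_
  calc M.demand X S τ
    _ ≤ X * #{i ∈ S | τ < M.d i ∧ M.d i ≤ σ} + M.demand X S σ :=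
        M.mul_card_filter_le_add_demand hX _ σ
    _ ≤ X * (M.slotCap X τ σ + M.bufferCap) + M.demand X S σ := by
        gcongr
        exact_mod_cast (obeysBounds_intervalBounds_iff.1 hS τ σ).2
    _ ≤ M.bandwidth τ σ + X * M.bufferCap + M.demand X S σ := by
        rw [mul_add]
        gcongr
        exact (le_slotCap_iff hX).1 le_rfl
    _ = M.bandwidth τ σ + M.demand X S σ + X * M.bufferCap := add_right_comm _ _ _

/-- The amount of chunk `i` downloaded in the slots after `τ` when the work of the reversed-time
policy is spent on the chunks of `S` in decreasing order of index. -/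
noncomputable def served (M : SchedModel) (X : ℝ) (S : Finset ℕ) (i τ : ℕ) : ℝ :=
  if i ∈ S then share X (rankAbove S i) (M.work X S τ) else 0

/-- The schedule of the reversed-time policy. By truncated subtraction, it is `0` in slot `0`. -/
noncomputable def revSchedule (M : SchedModel) (X : ℝ) (S : Finset ℕ) (i j : ℕ) : ℝ :=
  M.served X S i (j - 1) - M.served X S i j

lemma sum_revSchedule :
    ∑ j ∈ Icc 1 τ, M.revSchedule X S i j = M.served X S i 0 - M.served X S i τ := by
  induction τ with
  | zero => simp
  | succ n ih => rw [sum_Icc_succ_top (by omega), ih, revSchedule, Nat.add_sub_cancel]; ring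

lemma served_succ_le (hX : 0 < X) : M.served X S i (τ + 1) ≤ M.served X S i τ := by
  unfold served
  split_ifs
  · exact share_mono hX _ (work_succ_le hX)
  · exact le_rfl

lemma served_eq_zero_of_deadline_le (hX : 0 < X) (h : M.d i ≤ τ) : M.served X S i τ = 0 := by
  rw [served, ite_eq_right_iff]
  refine fun _ => share_eq_zero hX ((work_le_demand hX).trans ?_)
  unfold demand rankAbove
  gcongr X * (#?_ : ℝ)
  exact monotone_filter_right S fun k _ hk =>
    lt_of_not_ge fun hki => ((M.dmono hki).trans h).not_gt hk

lemma served_eq_size_of_lt_opening (hX : 0 < X) (hS : ObeysBounds (M.intervalBounds X) S)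
    (h : τ < M.t i) : M.served X S i τ = if i ∈ S then X else 0 := by
  rw [served]
  refine ite_congr rfl (fun hi => ?_) fun _ => rfl
  have h_rank : rankAbove S i + 1 ≤ #{k ∈ S | τ < M.t k} := by
    rw [rankAbove, ← card_insert_of_notMem (a := i) (by simp)]
    refine card_le_card (insert_subset (mem_filter.2 ⟨hi, h⟩) ?_)
    exact monotone_filter_right S fun k _ hik => h.trans_le (M.tmono (le_of_lt hik))
  refine share_eq_self hX (le_trans ?_ (mul_card_opening_le_work hX hS))
  gcongr
  exact_mod_cast h_rank

lemma sum_served (hX : 0 < X) (hS : S ⊆ Icc 1 M.C) :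
    ∑ i ∈ Icc 1 M.C, M.served X S i τ = M.work X S τ := by
  simp only [served]
  rw [← sum_filter, filter_mem_eq_inter, inter_eq_right.2 hS]
  refine sum_share (work_nonneg hX) ((work_le_demand hX).trans ?_)
  unfold demand
  gcongr
  exact filter_subset _ _

lemma work_lt_of_sum_revSchedule_pos (hX : 0 < X) (hS : ObeysBounds (M.intervalBounds X) S)
    (h : 0 < ∑ j ∈ Icc 1 τ, M.revSchedule X S i j) :
    i ∈ S ∧ M.work X S τ < X * (rankAbove S i + 1) := by
  rw [sum_revSchedule, served_eq_size_of_lt_opening hX hS (M.ht i), sub_pos] at h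
  by_cases hi : i ∈ S
  · refine ⟨hi, lt_of_not_ge fun hle => h.ne ?_⟩
    rw [served, if_pos hi, if_pos hi, share_eq_self hX hle]
  · simp [served, hi] at h

lemma card_buffered_revSchedule_le (hX : 0 < X) (hS : ObeysBounds (M.intervalBounds X) S) :
    #{i ∈ Icc 1 M.C | τ < M.d i ∧ 0 < ∑ j ∈ Icc 1 τ, M.revSchedule X S i j} ≤ M.bufferCap := by
  set V := {i ∈ Icc 1 M.C | τ < M.d i ∧ 0 < ∑ j ∈ Icc 1 τ, M.revSchedule X S i j}
  obtain hV | hV := V.eq_empty_or_nonempty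
  · simp [hV]
  have hV_mem : ∀ i ∈ V, τ < M.d i ∧ i ∈ S ∧ M.work X S τ < X * (rankAbove S i + 1) :=
    fun i hi => ⟨(mem_filter.1 hi).2.1, work_lt_of_sum_revSchedule_pos hX hS (mem_filter.1 hi).2.2⟩
  obtain ⟨m, hm, hmax⟩ := exists_max_image V id hV
  obtain ⟨hmd, -, hm_work⟩ := hV_mem m hm
  have h_count : #V + rankAbove S m ≤ #{i ∈ S | τ < M.d i} := by
    rw [rankAbove, ← card_union_of_disjoint]
    · refine card_le_card (union_subset (fun i hi => ?_) ?_)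
      · exact mem_filter.2 ⟨(hV_mem i hi).2.1, (hV_mem i hi).1⟩
      · exact monotone_filter_right S fun i _ hi => hmd.trans_le (M.dmono (le_of_lt hi))
    · exact disjoint_left.2 fun i hi hi' => (hmax i hi).not_gt (mem_filter.1 hi').2
  have h_lt : #{i ∈ S | τ < M.d i} < rankAbove S m + 1 + M.bufferCap := by
    have h_demand : X * #{i ∈ S | τ < M.d i} < X * (rankAbove S m + 1 + M.bufferCap) := by
      rw [mul_add]
      exact (demand_le_work_add hX hS).trans_lt (by gcongr)
    exact_mod_cast lt_of_mul_lt_mul_left h_demand hX.le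
  omega

lemma feasibleSet_of_obeysBounds (hX : 0 < X) (hSC : S ⊆ Icc 1 M.C)
    (hS : ObeysBounds (M.intervalBounds X) S) : M.FeasibleSet X S := by
  refine ⟨M.revSchedule X S, ?nonneg, ?window, ?size, ?band, fun τ => ?buffer⟩
  case nonneg =>
    rintro i (_ | j)
    · exact (sub_self _).ge
    · exact sub_nonneg.2 (served_succ_le hX)
  case window =>
    rintro i j (hj | hj)
    · rw [revSchedule, served_eq_size_of_lt_opening hX hS hj,
        served_eq_size_of_lt_opening hX hS ((j.sub_le 1).trans_lt hj), sub_self]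
    · rw [revSchedule, served_eq_zero_of_deadline_le hX hj.le,
        served_eq_zero_of_deadline_le hX (Nat.le_sub_one_of_lt hj), sub_self]
  case size =>
    intro i _
    rw [sum_revSchedule, served_eq_zero_of_deadline_le hX le_rfl, sub_zero]
    exact served_eq_size_of_lt_opening hX hS (M.ht i)
  case band =>
    intro j
    simp only [revSchedule]
    rw [sum_sub_distrib, sum_served hX hSC, sum_served hX hSC]
    cases j with
    | zero => simpa using M.hB 0
    | succ j => exact work_sub_work_succ_le hX
  case buffer => exact le_bufferCap_iff.1 (card_buffered_revSchedule_le hX hS)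

theorem feasibleSet_iff_obeysBounds (hX : 0 < X) (hS : S ⊆ Icc 1 M.C) :
    M.FeasibleSet X S ↔ ObeysBounds (M.intervalBounds X) S :=
  ⟨obeysBounds_of_feasibleSet hX hS, feasibleSet_of_obeysBounds hX hS⟩

lemma isBackwardGreedy_backGreedyAux {k : ℕ} (hk : k ≤ M.C) :
    IsBackwardGreedy (M.FeasibleSet X) (Ioc (M.C - k) M.C) (M.backGreedyAux X k) := by
  induction k with
  | zero => simp [IsBackwardGreedy, backGreedyAux]
  | succ k ih =>
    have hIoc : Ioc (M.C - (k + 1)) M.C = insert (M.C - k) (Ioc (M.C - k) M.C) := by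
      ext i
      simp only [mem_Ioc, mem_insert]
      omega
    rw [hIoc, backGreedyAux]
    exact (ih (by omega)).insert_of_forall_lt fun l hl => (mem_Ioc.1 hl).1

lemma isBackwardGreedy_backGreedy :
    IsBackwardGreedy (M.FeasibleSet X) (Icc 1 M.C) (M.backGreedy X) := by
  rw [show Icc 1 M.C = Ioc (M.C - M.C) M.C by rw [Nat.sub_self]; rfl]
  exact isBackwardGreedy_backGreedyAux le_rfl

theorem card_filter_le_backGreedy (hX : 0 < X) (hS : S ⊆ Icc 1 M.C) (hF : M.FeasibleSet X S) :
    ∀ m ∈ S, #{i ∈ S | m ≤ i} ≤ #{i ∈ M.backGreedy X | m ≤ i} :=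
  (isBackwardGreedy_backGreedy.congr fun _ hT => feasibleSet_iff_obeysBounds hX hT).card_filter_le
    (fun _ => ordConnected_of_mem_intervalBounds) hS (obeysBounds_of_feasibleSet hX hS hF)

end SchedModel

theorem backward_greedy_weighted_optimal_general (M : SchedModel) (X : ℝ) (hX : 0 < X)
    {N : Type*} [AddCommMonoid N] [PartialOrder N] [IsOrderedAddMonoid N]
    (w : ℕ → N) (hw : Monotone w) (hw₀ : 0 ≤ w) :
    ∀ S : Finset ℕ, S ⊆ Finset.Icc 1 M.C → M.FeasibleSet X S →
      ∑ i ∈ S, w i ≤ ∑ i ∈ M.backGreedy X, w i :=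
  fun _ hS hF => sum_le_sum_of_card_filter_le hw hw₀ (SchedModel.card_filter_le_backGreedy hX hS hF)

/-- Lemma 2: for any β ≥ 1, the backward greedy selection maximizes
the geometrically weighted sum of fetched chunk sizes over feasible selections. -/
theorem backward_greedy_weighted_optimal (M : SchedModel) (X : ℝ) (hX : 0 < X)
    (β : ℝ) (hβ : 1 ≤ β) :
    ∀ S : Finset ℕ, S ⊆ Finset.Icc 1 M.C → M.FeasibleSet X S →
      ∑ i ∈ S, β ^ i * X ≤ ∑ i ∈ M.backGreedy X, β ^ i * X :=
  fun S hS hF => backward_greedy_weighted_optimal_general M X hX (fun i => β ^ i * X)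
    (fun _ _ h => by dsimp only; gcongr) (fun i => by dsimp; positivity) S hS hF
end
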